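/- Let A = q·J + (p−q)·B be the expected adjacency matrix of a Stochastic Block Model on n = k·s nodes with k ≥ 2 blocks of size s ≥ 1 and p > q ≥ 0, p > 0, and let R be its Autocovariance matrix with walk length t ≥ 1. Writing e_t = s^{t−1}·((p−q)/d)^t with d = s·p + (k−1)·s·q, the Autocovariance values are exactly R_intra = (1 − 1/k)·e_t/n on intra-block pairs and R_inter = −e_t/(k·n) on inter-block pairs. -/

import Mathlib

open Matrix BigOperators

/-! The averaging matrix `P = J / n` and the block contrast `C = B / s - P` are orthogonal
idempotents, and the random walk matrix of the block model is `P + μ C` with `μ = s (p - q) / d`.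
Hence its `t`-th power is `P + μ ^ t C`. For a regular graph the subtracted rank-one term of the
autocovariance is exactly `P / n`, which leaves `R = μ ^ t C / n`. -/

theorem add_smul_pow_of_isIdempotentElem {K M : Type*} [CommSemiring K] [Semiring M] [Algebra K M]
    {e f : M} (he : IsIdempotentElem e) (hf : IsIdempotentElem f) (hef : e * f = 0)
    (hfe : f * e = 0) (c : K) {t : ℕ} (ht : t ≠ 0) :
    (e + c • f) ^ t = e + c ^ t • f := by
  induction t, Nat.one_le_iff_ne_zero.mpr ht using Nat.le_induction with
  | base => simp only [pow_one]
  | succ t one_le ih =>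
    rw [pow_succ, ih (Nat.one_le_iff_ne_zero.mp one_le)]
    simp only [add_mul, mul_add, smul_mul_assoc, mul_smul_comm, he.eq, hf.eq, hef, hfe, smul_smul,
      smul_zero, add_zero, zero_add, pow_succ']

section Averaging

open scoped Kronecker

/-- The matrix `J / n` that replaces a vector by its mean; it is a projection onto the
constant vectors when the size `n` of the index type is nonzero in `K`. -/
def averagingMatrix (K α : Type*) [Field K] [Fintype α] : Matrix α α K :=
  of fun _ _ => (Fintype.card α : K)⁻¹

variable {K α ι κ : Type*} [Field K] [Fintype α] [Fintype ι] [Fintype κ]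

theorem isIdempotentElem_averagingMatrix (h : (Fintype.card α : K) ≠ 0) :
    IsIdempotentElem (averagingMatrix K α) := by
  ext i j
  simp [averagingMatrix, mul_apply, h]

theorem averagingMatrix_prod :
    averagingMatrix K (ι × κ) = averagingMatrix K ι ⊗ₖ averagingMatrix K κ := by
  ext u v
  simp [averagingMatrix, mul_comm]

/-- The matrix `B / s - J / n` on `ι × κ`, where `ι` indexes the blocks and `κ` the positions inside
a block: the projection onto the block-constant vectors of mean zero. -/
def blockContrast (K ι κ : Type*) [Field K] [Fintype ι] [Fintype κ] [DecidableEq ι] :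
    Matrix (ι × κ) (ι × κ) K :=
  (1 - averagingMatrix K ι) ⊗ₖ averagingMatrix K κ

variable [DecidableEq ι]

theorem blockContrast_apply (u v : ι × κ) :
    blockContrast K ι κ u v =
      ((if u.1 = v.1 then 1 else 0) - (Fintype.card ι : K)⁻¹) * (Fintype.card κ : K)⁻¹ := by
  simp [blockContrast, averagingMatrix, one_apply]

theorem isIdempotentElem_blockContrast (hι : (Fintype.card ι : K) ≠ 0)
    (hκ : (Fintype.card κ : K) ≠ 0) : IsIdempotentElem (blockContrast K ι κ) := by
  rw [IsIdempotentElem, blockContrast, ← mul_kronecker_mul,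
    (isIdempotentElem_averagingMatrix hι).one_sub.eq, (isIdempotentElem_averagingMatrix hκ).eq]

theorem averagingMatrix_mul_blockContrast (hι : (Fintype.card ι : K) ≠ 0) :
    averagingMatrix K (ι × κ) * blockContrast K ι κ = 0 := by
  rw [averagingMatrix_prod, blockContrast, ← mul_kronecker_mul,
    (isIdempotentElem_averagingMatrix hι).mul_one_sub_self, zero_kronecker]

theorem blockContrast_mul_averagingMatrix (hι : (Fintype.card ι : K) ≠ 0) :
    blockContrast K ι κ * averagingMatrix K (ι × κ) = 0 := by
  rw [averagingMatrix_prod, blockContrast, ← mul_kronecker_mul,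
    (isIdempotentElem_averagingMatrix hι).one_sub_mul_self, zero_kronecker]

end Averaging

section Autocovariance

/-- The degree of a node of the weighted graph with adjacency matrix `A`. -/
def weightedDegree {K α : Type*} [AddCommMonoid K] [Fintype α] (A : Matrix α α K) (i : α) : K :=
  ∑ j, A i j

/-- The volume of the weighted graph with adjacency matrix `A`, that is, its total degree. -/
def weightedVolume {K α : Type*} [AddCommMonoid K] [Fintype α] (A : Matrix α α K) : K :=
  ∑ i, weightedDegree A i

variable {K α : Type*} [Field K] [Fintype α] [DecidableEq α]

/-- The autocovariance matrix `(D / vol) (D⁻¹ A) ^ t - d dᵀ / vol ^ 2` of the random walk of length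
`t` on the weighted graph with adjacency matrix `A`. It is meaningful only when all degrees and the
volume are nonzero, the inverses being `0` otherwise. -/
noncomputable def autocovariance (A : Matrix α α K) (t : ℕ) : Matrix α α K :=
  (weightedVolume A)⁻¹ •
      (diagonal (weightedDegree A) * ((diagonal (weightedDegree A))⁻¹ * A) ^ t) -
    (weightedVolume A ^ 2)⁻¹ • vecMulVec (weightedDegree A) (weightedDegree A)

variable {A : Matrix α α K} {d : K}

theorem autocovariance_of_weightedDegree_eq (h : ∀ i, weightedDegree A i = d) (t : ℕ) :
    autocovariance A t =
      (Fintype.card α * d)⁻¹ • ((d • 1) * ((d • 1)⁻¹ * A) ^ t) -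
        ((Fintype.card α * d) ^ 2)⁻¹ • of fun _ _ : α => d * d := by
  have hvol : weightedVolume A = Fintype.card α * d := by simp [weightedVolume, h]
  have hdeg : weightedDegree A = fun _ => d := funext h
  rw [autocovariance, hvol, hdeg, ← smul_one_eq_diagonal]
  rfl

theorem autocovariance_eq_smul_pow_sub_averagingMatrix (h : ∀ i, weightedDegree A i = d)
    (hd : d ≠ 0) (t : ℕ) :
    autocovariance A t = (Fintype.card α : K)⁻¹ • ((d⁻¹ • A) ^ t - averagingMatrix K α) := by
  have hinv : (d • 1 : Matrix α α K)⁻¹ = d⁻¹ • 1 :=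
    inv_eq_right_inv (by simp [smul_smul, hd])
  rw [autocovariance_of_weightedDegree_eq h, hinv, smul_mul, smul_mul, one_mul, one_mul]
  have hcancel : (Fintype.card α * d)⁻¹ * d = (Fintype.card α : K)⁻¹ := by field_simp
  ext i j
  simp only [Matrix.sub_apply, Matrix.smul_apply, of_apply, smul_eq_mul, averagingMatrix]
  linear_combination
    (((d⁻¹ • A) ^ t) i j - (Fintype.card α * d)⁻¹ * d - (Fintype.card α : K)⁻¹) * hcancel

end Autocovariance

section StochasticBlockModel

/-- The expected adjacency matrix `q J + (p - q) B` of the stochastic block model with intra-block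
density `p` and inter-block density `q`; the node `(i, a)` is the `a`-th node of block `i`. -/
def sbmMatrix {K : Type*} (ι κ : Type*) [Ring K] [DecidableEq ι] (p q : K) :
    Matrix (ι × κ) (ι × κ) K :=
  q • (of fun _ _ => 1) + (p - q) • of fun u v => if u.1 = v.1 then 1 else 0

variable {K ι κ : Type*} [Field K] [Fintype ι] [Fintype κ] [DecidableEq ι] {p q d : K}

theorem weightedDegree_sbmMatrix (p q : K) (u : ι × κ) :
    weightedDegree (sbmMatrix ι κ p q) u =
      Fintype.card κ * p + (Fintype.card ι - 1) * Fintype.card κ * q := by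
  simp only [weightedDegree, sbmMatrix, Matrix.add_apply, Matrix.smul_apply, of_apply, smul_eq_mul,
    Fintype.sum_prod_type_right, Finset.sum_add_distrib, ← Finset.mul_sum, Finset.sum_const,
    Finset.sum_ite_eq, Finset.mem_univ, if_true, Finset.card_univ, nsmul_eq_mul,
    Fintype.card_prod, Nat.cast_mul]
  ring

theorem inv_smul_sbmMatrix (hι : (Fintype.card ι : K) ≠ 0) (hκ : (Fintype.card κ : K) ≠ 0)
    (hd : d = Fintype.card κ * p + (Fintype.card ι - 1) * Fintype.card κ * q) (hd0 : d ≠ 0) :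
    d⁻¹ • sbmMatrix ι κ p q =
      averagingMatrix K (ι × κ) + (Fintype.card κ * ((p - q) / d)) • blockContrast K ι κ := by
  ext u v
  simp only [sbmMatrix, averagingMatrix, blockContrast_apply, Matrix.add_apply, Matrix.smul_apply,
    of_apply, smul_eq_mul, Fintype.card_prod, Nat.cast_mul]
  field_simp
  rw [hd]
  ring

variable [DecidableEq κ]

theorem autocovariance_sbmMatrix (hι : (Fintype.card ι : K) ≠ 0)
    (hd : d = Fintype.card κ * p + (Fintype.card ι - 1) * Fintype.card κ * q) (hd0 : d ≠ 0)
    {t : ℕ} (ht : t ≠ 0) :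
    autocovariance (sbmMatrix ι κ p q) t =
      ((Fintype.card ι * Fintype.card κ : K)⁻¹ * (Fintype.card κ * ((p - q) / d)) ^ t) •
        blockContrast K ι κ := by
  have hκ : (Fintype.card κ : K) ≠ 0 := fun h => hd0 (by simp [hd, h])
  have hικ : (Fintype.card (ι × κ) : K) ≠ 0 := by simp [hι, hκ]
  have hdeg : ∀ u, weightedDegree (sbmMatrix ι κ p q) u = d :=
    fun u => (weightedDegree_sbmMatrix p q u).trans hd.symm
  rw [autocovariance_eq_smul_pow_sub_averagingMatrix hdeg hd0, inv_smul_sbmMatrix hι hκ hd hd0,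
    add_smul_pow_of_isIdempotentElem (isIdempotentElem_averagingMatrix hικ)
      (isIdempotentElem_blockContrast hι hκ) (averagingMatrix_mul_blockContrast hι)
      (blockContrast_mul_averagingMatrix hι) _ ht,
    add_sub_cancel_left, smul_smul, Fintype.card_prod, Nat.cast_mul]

theorem sbm_autocovariance_values_general (hι : (Fintype.card ι : K) ≠ 0)
    (hd : d = Fintype.card κ * p + (Fintype.card ι - 1) * Fintype.card κ * q) (hd0 : d ≠ 0)
    {t : ℕ} (ht : 1 ≤ t) :
    (∀ u v : ι × κ, u.1 = v.1 →
      autocovariance (sbmMatrix ι κ p q) t u v =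
        (1 - 1 / (Fintype.card ι : K)) * ((Fintype.card κ : K) ^ (t - 1) * ((p - q) / d) ^ t) /
          (Fintype.card ι * Fintype.card κ)) ∧
    (∀ u v : ι × κ, u.1 ≠ v.1 →
      autocovariance (sbmMatrix ι κ p q) t u v =
        -((Fintype.card κ : K) ^ (t - 1) * ((p - q) / d) ^ t) /
          (Fintype.card ι * (Fintype.card ι * Fintype.card κ))) := by
  have hκ : (Fintype.card κ : K) ≠ 0 := fun h => hd0 (by simp [hd, h])
  have hpow : (Fintype.card κ * ((p - q) / d)) ^ t =
      Fintype.card κ * ((Fintype.card κ : K) ^ (t - 1) * ((p - q) / d) ^ t) := by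
    rw [mul_pow, ← mul_assoc, mul_pow_sub_one (Nat.one_le_iff_ne_zero.mp ht)]
  rw [autocovariance_sbmMatrix hι hd hd0 (Nat.one_le_iff_ne_zero.mp ht), hpow]
  generalize (Fintype.card κ : K) ^ (t - 1) * ((p - q) / d) ^ t = e
  refine ⟨fun u v huv => ?_, fun u v huv => ?_⟩
  · rw [Matrix.smul_apply, blockContrast_apply, if_pos huv, smul_eq_mul]
    field_simp
  · rw [Matrix.smul_apply, blockContrast_apply, if_neg huv, smul_eq_mul]
    field_simp
    ring

theorem sbm_degree_pos {k s : ℕ} (hk : 1 ≤ k) (hs : 1 ≤ s) {p q : ℝ} (hp : 0 < p) (hq : 0 ≤ q) :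
    0 < (s : ℝ) * p + ((k : ℝ) - 1) * (s : ℝ) * q := by
  have hs0 : (0 : ℝ) < s := by exact_mod_cast hs
  have hk1 : (0 : ℝ) ≤ k - 1 := sub_nonneg.mpr (by exact_mod_cast hk)
  exact add_pos_of_pos_of_nonneg (mul_pos hs0 hp) (mul_nonneg (mul_nonneg hk1 hs0.le) hq)

end StochasticBlockModel

/-- Writing `e_t = s^(t−1) ((p − q)/d)^t` with `d = s p + (k − 1) s q`, the
Autocovariance values of the expected SBM at walk length `t ≥ 1` are exactly
`R_intra = (1 − 1/k) e_t / n` on intra-block pairs and `R_inter = −e_t / (k n)` on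
inter-block pairs. -/
theorem sbm_autocovariance_values (k s : ℕ) (hk : 2 ≤ k) (hs : 1 ≤ s)
    (p q : ℝ) (hq : 0 ≤ q) (hpq : q < p) (hp : 0 < p)
    (J B A : Matrix (Fin k × Fin s) (Fin k × Fin s) ℝ)
    (hJ : J = Matrix.of fun _ _ => (1 : ℝ))
    (hB : B = Matrix.of fun u v => if u.1 = v.1 then (1 : ℝ) else 0)
    (hA : A = q • J + (p - q) • B)
    (dval : ℝ) (hd : dval = (s : ℝ) * p + ((k : ℝ) - 1) * (s : ℝ) * q)
    (D : Matrix (Fin k × Fin s) (Fin k × Fin s) ℝ) (hD : D = dval • 1)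
    (vol : ℝ) (hvol : vol = ((k : ℝ) * (s : ℝ)) * dval)
    (t : ℕ) (ht : 1 ≤ t)
    (R : Matrix (Fin k × Fin s) (Fin k × Fin s) ℝ)
    (hR : R = vol⁻¹ • (D * (D⁻¹ * A) ^ t) -
      (vol ^ 2)⁻¹ • Matrix.of (fun _ _ : Fin k × Fin s => dval * dval)) :
    (∀ u v : Fin k × Fin s, u.1 = v.1 →
      R u v = (1 - 1 / (k : ℝ)) * ((s : ℝ) ^ (t - 1) * ((p - q) / dval) ^ t) /
        ((k : ℝ) * (s : ℝ))) ∧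
    (∀ u v : Fin k × Fin s, u.1 ≠ v.1 →
      R u v = -((s : ℝ) ^ (t - 1) * ((p - q) / dval) ^ t) /
        ((k : ℝ) * ((k : ℝ) * (s : ℝ)))) := by
  have hdeg : ∀ u, weightedDegree (sbmMatrix (Fin k) (Fin s) p q) u = dval := by
    simp [weightedDegree_sbmMatrix, hd]
  have hRA : R = autocovariance (sbmMatrix (Fin k) (Fin s) p q) t := by
    rw [autocovariance_of_weightedDegree_eq hdeg, hR, hvol, hD, hA, hB, hJ, sbmMatrix,
      Fintype.card_prod, Fintype.card_fin, Fintype.card_fin, Nat.cast_mul]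
  have hd0 : dval ≠ 0 := hd ▸ (sbm_degree_pos (one_le_two.trans hk) hs hp hq).ne'
  simpa [hRA] using sbm_autocovariance_values_general (ι := Fin k) (κ := Fin s)
    (by rw [Fintype.card_fin]; positivity) (by simpa using hd) hd0 ht
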